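/- Let b be a prime and r ∈ ℕ with r ≥ 2. If k, l ∈ ℕ₀ satisfy κ(k ⊖ l) > r, then b̂_{r,per}(k, l) = 0. -/

import Mathlib

/-!
For a polynomial `P`, the kernel `P (fract (x - y))` equals `P (x - y)` on the unit square, plus a
jump `1_{x < y} Q (x - y)` across the diagonal, where `Q (t) = P (t + 1) - P (t)` has smaller degree
than `P`. It is enough that a kernel of this kind, with `deg P < d` and `deg Q < d - 1`, has zero
Walsh coefficient at `(k, l)` when `k` and `l` differ in `d` digits.

Cut the square into `b × b` similar cells by the leading digits `ξ, η` of `x, y`. Walsh functions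
are self-similar: rescaling a cell to the whole square multiplies
`conj (wal_k (x)) * wal_l (y)` by the constant `ω ^ (l η - k ξ)` and removes the lowest digits
of `k` and `l`. The kernel stays of the same kind: its jump survives only in the diagonal cells,
where it is the same in each of them, and off the diagonal it merges into the polynomial part. If
the lowest digits of `k` and `l` differ, the constants add up to zero over all cells, which cancels
the leading term of `P`, and over the diagonal cells, which cancels the jump. So both degree bounds
drop together with the number of differing digits, and induction on the number of digits applies.
-/


open scoped BigOperators

/-- The `i`-th digit (starting from `i = 0`) of the `b`-adic expansion of `k`. -/
def bdigit (b k i : ℕ) : ℕ := k / b ^ i % b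

/-- The set of indices of nonzero `b`-adic digits of `k`. -/
def bsupp (b k : ℕ) : Finset ℕ := (Finset.range (k + 1)).filter fun i => bdigit b k i ≠ 0

/-- The Hamming metric `κ(k)`: the number of nonzero `b`-adic digits of `k`. -/
def hamming (b k : ℕ) : ℕ := (bsupp b k).card

/-- The Dick metric `μ_α(k)`: the sum of the `min(v, α)` largest exponents-plus-one
`a_1 > a_2 > ⋯` of the nonzero `b`-adic digits of `k`. -/
def dick (b α k : ℕ) : ℕ := ((((bsupp b k).sort (· ≤ ·)).reverse.take α).map (· + 1)).sum

/-- Digitwise addition `k ⊕ l` modulo `b` of the `b`-adic digits. -/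
def dadd (b k l : ℕ) : ℕ :=
  ∑ i ∈ Finset.range (k + l + 1), (bdigit b k i + bdigit b l i) % b * b ^ i

/-- Digitwise subtraction `k ⊖ l` modulo `b` of the `b`-adic digits. -/
def dsub (b k l : ℕ) : ℕ :=
  ∑ i ∈ Finset.range (k + l + 1), (bdigit b k i + (b - bdigit b l i)) % b * b ^ i

/-- Hamming metric of a vector: sum over coordinates. -/
def hammingVec (b : ℕ) {s : ℕ} (k : Fin s → ℕ) : ℕ := ∑ j, hamming b (k j)

/-- Dick metric of a vector: sum over coordinates. -/
def dickVec (b α : ℕ) {s : ℕ} (k : Fin s → ℕ) : ℕ := ∑ j, dick b α (k j)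

open MeasureTheory

/-- The `i`-th (for `i ≥ 1`) `b`-adic digit `ξ_i` of a real number `x ∈ [0,1)`, using the
expansion in which infinitely many digits differ from `b - 1`. -/
noncomputable def rdigit (b : ℕ) (x : ℝ) (i : ℕ) : ℤ := ⌊x * (b : ℝ) ^ i⌋ % b

/-- The `k`-th `b`-adic Walsh function, `wal_k(x) = ω_b^{κ_0 ξ_1 + κ_1 ξ_2 + ⋯}` where
`ω_b = exp(2π√-1/b)`, `κ` are the `b`-adic digits of `k` and `ξ` those of `x`. -/
noncomputable def walsh (b k : ℕ) (x : ℝ) : ℂ :=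
  Complex.exp (2 * (Real.pi : ℂ) * Complex.I / (b : ℂ) *
    ∑ a ∈ Finset.range (k + 1), (bdigit b k a : ℂ) * (rdigit b x (a + 1) : ℂ))

/-- The `k`-th `b`-adic Walsh function on `[0,1)^s`, `wal_k(x) = ∏_j wal_{k_j}(x_j)`. -/
noncomputable def walshVec (b : ℕ) {s : ℕ} (k : Fin s → ℕ) (x : Fin s → ℝ) : ℂ :=
  ∏ j, walsh b (k j) (x j)

/-- The Bernoulli polynomial `B_r` evaluated at a real number. -/
noncomputable def bernoulliPoly (r : ℕ) (x : ℝ) : ℝ := Polynomial.aeval x (Polynomial.bernoulli r)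

/-- The reproducing kernel `K_α` of the Sobolev space `H_α`:
`K_α(x,y) = ∑_{r=0}^{α} B_r(x)B_r(y)/(r!)² + (-1)^{α+1} B_{2α}(|x-y|)/(2α)!`. -/
noncomputable def Kker (α : ℕ) (x y : ℝ) : ℝ :=
  ∑ r ∈ Finset.range (α + 1), bernoulliPoly r x * bernoulliPoly r y / ((r.factorial : ℝ)) ^ 2
    + (-1 : ℝ) ^ (α + 1) * bernoulliPoly (2 * α) |x - y| / ((2 * α).factorial : ℝ)

/-- The `(k,l)`-th Walsh coefficient of the kernel `K_α`. -/
noncomputable def Khat (b α : ℕ) (k l : ℕ) : ℂ :=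
  ∫ x in Set.Ico (0 : ℝ) 1, ∫ y in Set.Ico (0 : ℝ) 1,
    (Kker α x y : ℂ) * (starRingEnd ℂ) (walsh b k x) * walsh b l y

/-- The `(k,l)`-th Walsh coefficient of the `s`-variate kernel
`K_{α,s}(x,y) = ∏_j K_α(x_j, y_j)`. -/
noncomputable def KhatS (b α s : ℕ) (k l : Fin s → ℕ) : ℂ :=
  ∫ x in Set.univ.pi fun _ : Fin s => Set.Ico (0 : ℝ) 1,
    ∫ y in Set.univ.pi fun _ : Fin s => Set.Ico (0 : ℝ) 1,
      ((∏ j, Kker α (x j) (y j) : ℝ) : ℂ) * (starRingEnd ℂ) (walshVec b k x) * walshVec b l y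

/-- The `k`-th Walsh coefficient `b̂_r(k)` of the normalized Bernoulli polynomial `B_r/r!`. -/
noncomputable def bhat (b r k : ℕ) : ℂ :=
  ∫ x in Set.Ico (0 : ℝ) 1,
    ((bernoulliPoly r x / (r.factorial : ℝ) : ℝ) : ℂ) * (starRingEnd ℂ) (walsh b k x)

/-- The `(k,l)`-th Walsh coefficient `b̂_{r,per}(k,l)` of `(x,y) ↦ B̃_r(x-y)/r!`, where
`B̃_r` is the 1-periodic extension of the Bernoulli polynomial `B_r` from `[0,1)` to `ℝ`. -/
noncomputable def bhatPer (b r : ℕ) (k l : ℕ) : ℂ :=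
  ∫ x in Set.Ico (0 : ℝ) 1, ∫ y in Set.Ico (0 : ℝ) 1,
    ((bernoulliPoly r (Int.fract (x - y)) / (r.factorial : ℝ) : ℝ) : ℂ) *
      (starRingEnd ℂ) (walsh b k x) * walsh b l y

open Polynomial Set

/-! ### Digits -/

section Digits

variable {b : ℕ}

lemma bdigit_zero_left (b i : ℕ) : bdigit b 0 i = 0 := by simp [bdigit]

lemma bdigit_zero_right (b k : ℕ) : bdigit b k 0 = k % b := by simp [bdigit]

lemma bdigit_succ (b k i : ℕ) : bdigit b k (i + 1) = bdigit b (k / b) i := by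
  simp [bdigit, Nat.div_div_eq_div_mul, pow_succ']

lemma bdigit_lt (hb : 0 < b) (k i : ℕ) : bdigit b k i < b := Nat.mod_lt _ hb

lemma bdigit_eq_zero_of_le {k i : ℕ} (hb : 1 < b) (h : k ≤ i) : bdigit b k i = 0 := by
  rw [bdigit, Nat.div_eq_of_lt (h.trans_lt (Nat.lt_pow_self hb)), Nat.zero_mod]

lemma bdigit_sum_mul_pow {c : ℕ → ℕ} (hc : ∀ i, c i < b) (n j : ℕ) :
    bdigit b (∑ i ∈ Finset.range n, c i * b ^ i) j = if j < n then c j else 0 := by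
  induction n generalizing c j with
  | zero => simp [bdigit_zero_left]
  | succ n ih =>
    have horner : ∑ i ∈ Finset.range (n + 1), c i * b ^ i
        = c 0 + b * ∑ i ∈ Finset.range n, c (i + 1) * b ^ i := by
      simp_rw [Finset.sum_range_succ', Finset.mul_sum, pow_succ', mul_left_comm b, pow_zero,
        mul_one, add_comm]
    rw [horner]
    cases j with
    | zero => simp [bdigit_zero_right, Nat.mod_eq_of_lt (hc 0)]
    | succ j =>
      have hb : 0 < b := (Nat.zero_le _).trans_lt (hc 0)
      rw [bdigit_succ, Nat.add_mul_div_left _ _ hb, Nat.div_eq_of_lt (hc 0), zero_add,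
        ih fun i => hc (i + 1)]
      simp

lemma bdigit_dsub (hb : 1 < b) (k l i : ℕ) :
    bdigit b (dsub b k l) i = (bdigit b k i + (b - bdigit b l i)) % b := by
  rw [dsub, bdigit_sum_mul_pow fun i => Nat.mod_lt _ (Nat.zero_lt_of_lt hb)]
  split_ifs with hi
  · rfl
  · rw [bdigit_eq_zero_of_le hb (by omega : k ≤ i), bdigit_eq_zero_of_le hb (by omega : l ≤ i)]
    simp

lemma bdigit_dsub_eq_zero_iff (hb : 1 < b) {k l i : ℕ} :
    bdigit b (dsub b k l) i = 0 ↔ bdigit b k i = bdigit b l i := by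
  have hk := bdigit_lt (Nat.zero_lt_of_lt hb) k i
  have hl := bdigit_lt (Nat.zero_lt_of_lt hb) l i
  rw [bdigit_dsub hb]
  constructor
  · intro h
    obtain ⟨q, hq⟩ := Nat.dvd_of_mod_eq_zero h
    have : q = 1 := by nlinarith [Nat.sub_add_cancel hl.le, Nat.sub_le b (bdigit b l i)]
    subst this
    omega
  · intro h
    rw [h, Nat.add_sub_cancel' hl.le, Nat.mod_self]

/-- The vector of the lowest `n` digits of `k`, so that Mathlib's `hammingDist` compares digits. -/
def digitVec (b n k : ℕ) : Fin n → ℕ := fun i => bdigit b k i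

lemma hammingDist_digitVec_succ (b n k l : ℕ) :
    hammingDist (digitVec b (n + 1) k) (digitVec b (n + 1) l)
      = hammingDist (digitVec b n (k / b)) (digitVec b n (l / b))
        + if k % b = l % b then 0 else 1 := by
  rw [hammingDist, hammingDist, Finset.card_filter, Finset.card_filter, Fin.sum_univ_succ, add_comm]
  simp only [digitVec, Fin.val_zero, Fin.val_succ, bdigit_succ, bdigit_zero_right]
  rw [ite_not]
  rfl

lemma mem_bsupp (hb : 1 < b) {k i : ℕ} : i ∈ bsupp b k ↔ bdigit b k i ≠ 0 := by
  simp only [bsupp, Finset.mem_filter, Finset.mem_range, and_iff_right_iff_imp]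
  intro h
  by_contra! hki
  exact h (bdigit_eq_zero_of_le hb (by omega))

lemma hamming_dsub (hb : 1 < b) (k l : ℕ) :
    hamming b (dsub b k l) = hammingDist (digitVec b (k + l) k) (digitVec b (k + l) l) := by
  have hmem (i : ℕ) : i ∈ bsupp b (dsub b k l) ↔ bdigit b k i ≠ bdigit b l i := by
    rw [mem_bsupp hb, Ne, bdigit_dsub_eq_zero_iff hb]
  refine (Finset.card_nbij Fin.val (fun i hi => ?_) Fin.val_injective.injOn fun i hi => ?_).symm
  · exact (hmem i).2 (Finset.mem_filter.1 hi).2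
  · have hne := (hmem i).1 hi
    have hlt : i < k + l := by
      by_contra! h
      rw [bdigit_eq_zero_of_le hb (by omega), bdigit_eq_zero_of_le hb (by omega)] at hne
      exact hne rfl
    exact ⟨⟨i, hlt⟩, Finset.mem_coe.2 (Finset.mem_filter.2 ⟨Finset.mem_univ _, hne⟩), rfl⟩

end Digits

/-! ### Walsh functions -/

/-- The primitive root of unity `ω_b = exp(2πi/b)`. -/
noncomputable def walshRoot (b : ℕ) : ℂ := Complex.exp (2 * Real.pi * Complex.I / b)

/-- The point of `[0, 1)` whose expansion is `ξ` followed by that of `x ∈ [0, 1)`. -/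
noncomputable def prependDigit {b : ℕ} (ξ : Fin b) (x : ℝ) : ℝ := (ξ + x) / b

section Walsh

variable {b : ℕ}

lemma isPrimitiveRoot_walshRoot (hb : b ≠ 0) : IsPrimitiveRoot (walshRoot b) b :=
  Complex.isPrimitiveRoot_exp b hb

lemma walshRoot_ne_zero (b : ℕ) : walshRoot b ≠ 0 := Complex.exp_ne_zero _

lemma norm_walshRoot (b : ℕ) : ‖walshRoot b‖ = 1 := by
  have : (2 * Real.pi * Complex.I / b : ℂ) = (2 * Real.pi / b : ℝ) * Complex.I := by
    push_cast; ring
  rw [walshRoot, this, Complex.norm_exp_ofReal_mul_I]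

lemma sum_walshRoot_zpow_mul_eq_zero {d : ℤ} (hd : ¬ (b : ℤ) ∣ d) :
    ∑ ξ : Fin b, walshRoot b ^ (d * ξ) = 0 := by
  rcases eq_or_ne b 0 with rfl | hb
  · simp
  have hω := isPrimitiveRoot_walshRoot hb
  have hne : walshRoot b ^ d ≠ 1 := fun h => hd ((hω.zpow_eq_one_iff_dvd d).1 h)
  have hpow : (walshRoot b ^ d) ^ b = 1 := by
    rw [← zpow_natCast, zpow_comm, zpow_natCast, hω.pow_eq_one, one_zpow]
  simp_rw [zpow_mul, zpow_natCast]
  rw [Fin.sum_univ_eq_sum_range (fun ξ => (walshRoot b ^ d) ^ ξ), geom_sum_eq hne, hpow, sub_self,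
    zero_div]

lemma walsh_eq_zpow (b k : ℕ) (x : ℝ) :
    walsh b k x
      = walshRoot b ^ ∑ a ∈ Finset.range (k + 1), (bdigit b k a : ℤ) * rdigit b x (a + 1) := by
  rw [walsh, walshRoot, ← Complex.exp_int_mul, mul_comm]
  push_cast
  rfl

lemma norm_walsh (b k : ℕ) (x : ℝ) : ‖walsh b k x‖ = 1 := by
  rw [walsh_eq_zpow, norm_zpow, norm_walshRoot, one_zpow]

lemma measurable_walsh (b k : ℕ) : Measurable (walsh b k) := by
  have hdigit (i : ℕ) : Measurable fun x : ℝ => rdigit b x i :=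
    (measurable_from_top (f := fun z : ℤ => z % b)).comp
      (Int.measurable_floor.comp (measurable_id.mul_const _))
  simp_rw [funext (walsh_eq_zpow b k)]
  exact (measurable_from_top (f := fun z : ℤ => walshRoot b ^ z)).comp
    (Finset.measurable_sum _ fun a _ => (hdigit (a + 1)).const_mul _)

lemma rdigit_prependDigit_one (ξ : Fin b) {x : ℝ} (hx : x ∈ Ico (0 : ℝ) 1) :
    rdigit b (prependDigit ξ x) 1 = ξ := by
  have hb : (b : ℝ) ≠ 0 := Nat.cast_ne_zero.2 ξ.pos.ne'
  rw [rdigit, prependDigit, pow_one, div_mul_cancel₀ _ hb, Int.floor_natCast_add,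
    Int.floor_eq_zero_iff.2 hx, add_zero]
  exact Int.emod_eq_of_lt (by positivity) (by exact_mod_cast ξ.is_lt)

lemma rdigit_prependDigit_succ (ξ : Fin b) (x : ℝ) {i : ℕ} (hi : i ≠ 0) :
    rdigit b (prependDigit ξ x) (i + 1) = rdigit b x i := by
  have hb : (b : ℝ) ≠ 0 := Nat.cast_ne_zero.2 ξ.pos.ne'
  obtain ⟨i, rfl⟩ := Nat.exists_eq_succ_of_ne_zero hi
  have hmul : prependDigit ξ x * (b : ℝ) ^ (i + 1 + 1)
      = ((ξ * b ^ i * b : ℕ) : ℝ) + x * (b : ℝ) ^ (i + 1) := by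
    rw [prependDigit]
    field_simp
    push_cast
    ring
  rw [rdigit, rdigit, Nat.succ_eq_add_one, hmul, Int.floor_natCast_add]
  push_cast
  rw [add_comm, Int.add_mul_emod_self_right]

lemma sum_bdigit_mul_eq (hb : 1 < b) {k n : ℕ} (hn : k ≤ n) (c : ℕ → ℤ) :
    ∑ a ∈ Finset.range n, (bdigit b k a : ℤ) * c a =
      ∑ a ∈ Finset.range k, (bdigit b k a : ℤ) * c a := by
  refine (Finset.sum_subset (Finset.range_mono hn) fun a _ ha => ?_).symm
  rw [bdigit_eq_zero_of_le hb (by simpa using ha), Nat.cast_zero, zero_mul]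

lemma walsh_prependDigit (hb : 1 < b) (k : ℕ) (ξ : Fin b) {x : ℝ} (hx : x ∈ Ico (0 : ℝ) 1) :
    walsh b k (prependDigit ξ x) = walshRoot b ^ (k * ξ : ℤ) * walsh b (k / b) x := by
  have hmod : walshRoot b ^ (k * ξ : ℤ) = walshRoot b ^ ((k % b : ℕ) * ξ : ℤ) := by
    have hω := (isPrimitiveRoot_walshRoot (Nat.zero_lt_of_lt hb).ne').pow_eq_one
    norm_cast
    rw [pow_mul, pow_mul, pow_eq_pow_mod _ hω]
  rw [hmod, walsh_eq_zpow, walsh_eq_zpow, ← zpow_add₀ (walshRoot_ne_zero b)]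
  congr 1
  rw [Finset.sum_range_succ', sum_bdigit_mul_eq hb (Nat.le_succ (k / b)),
    ← sum_bdigit_mul_eq hb (Nat.div_le_self k b), add_comm]
  simp only [bdigit_succ, bdigit_zero_right, zero_add, rdigit_prependDigit_one ξ hx,
    rdigit_prependDigit_succ ξ x (Nat.succ_ne_zero _)]

end Walsh

/-! ### Self-similarity of the unit square -/

/-- Lebesgue measure on `[0, 1)`. -/
noncomputable abbrev unitVolume : Measure ℝ := volume.restrict (Ico 0 1)

/-- Lebesgue measure on `[0, 1)²`. -/
noncomputable abbrev unitSquareVolume : Measure (ℝ × ℝ) := unitVolume.prod unitVolume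

/-- The similarity of `[0, 1)²` onto the cell of points with leading digits `i.1` and `i.2`. -/
noncomputable def prependDigits {b : ℕ} (i : Fin b × Fin b) : ℝ × ℝ → ℝ × ℝ :=
  Prod.map (prependDigit i.1) (prependDigit i.2)

section SelfSimilarity

variable {b : ℕ}

lemma prependDigit_lt_prependDigit_iff {ξ η : Fin b} {x y : ℝ} (hx : x ∈ Ico (0 : ℝ) 1)
    (hy : y ∈ Ico (0 : ℝ) 1) :
    prependDigit ξ x < prependDigit η y ↔ ξ < η ∨ ξ = η ∧ x < y := by
  have hb : (0 : ℝ) < b := Nat.cast_pos.2 ξ.pos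
  rw [prependDigit, prependDigit, div_lt_div_iff_of_pos_right hb]
  obtain ⟨hx0, hx1⟩ := hx
  obtain ⟨hy0, hy1⟩ := hy
  rcases lt_trichotomy ξ η with h | rfl | h
  · have : (ξ + 1 : ℝ) ≤ η := by exact_mod_cast h
    simp only [h, true_or, iff_true]
    linarith
  · simp
  · have : (η + 1 : ℝ) ≤ ξ := by exact_mod_cast h
    simp only [h.not_gt, h.ne', false_and, or_self, iff_false]
    linarith

lemma measurable_prependDigit (ξ : Fin b) : Measurable (prependDigit ξ) :=
  (measurable_id.const_add _).div_const _

lemma measurable_prependDigits (i : Fin b × Fin b) : Measurable (prependDigits i) :=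
  (measurable_prependDigit i.1).prodMap (measurable_prependDigit i.2)

lemma map_prependDigit_volume (ξ : Fin b) :
    volume.map (prependDigit ξ) = (b : ENNReal) • volume := by
  have hb : (b : ℝ)⁻¹ ≠ 0 := inv_ne_zero (Nat.cast_ne_zero.2 ξ.pos.ne')
  have hcomp : prependDigit ξ = (· * (b : ℝ)⁻¹) ∘ ((ξ : ℝ) + ·) := by
    funext x; exact div_eq_mul_inv _ _
  rw [hcomp, ← Measure.map_map (measurable_mul_const _) (measurable_const_add _),
    map_add_left_eq_self, Real.map_volume_mul_right hb, inv_inv, Nat.abs_cast,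
    ENNReal.ofReal_natCast]

/-- The interval of points of `[0, 1)` with leading digit `ξ`. -/
def digitInterval {b : ℕ} (ξ : Fin b) : Set ℝ := Ico (ξ / b : ℝ) ((ξ + 1) / b)

lemma measurableSet_digitInterval (ξ : Fin b) : MeasurableSet (digitInterval ξ) :=
  measurableSet_Ico

lemma mem_digitInterval {ξ : Fin b} {x : ℝ} : x ∈ digitInterval ξ ↔ ⌊x * b⌋ = ξ := by
  have hb : (0 : ℝ) < b := Nat.cast_pos.2 ξ.pos
  rw [digitInterval, mem_Ico, div_le_iff₀ hb, lt_div_iff₀ hb, Int.floor_eq_iff, Int.cast_natCast]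

lemma pairwise_disjoint_digitInterval :
    Pairwise (Function.onFun Disjoint (digitInterval (b := b))) := fun _ _ hne =>
  disjoint_left.2 fun _ hξ hη => hne <| Fin.ext <| Int.natCast_inj.1 <|
    (mem_digitInterval.1 hξ).symm.trans (mem_digitInterval.1 hη)

lemma iUnion_digitInterval (hb : b ≠ 0) : ⋃ ξ : Fin b, digitInterval ξ = Ico 0 1 := by
  have hpos : (0 : ℝ) < b := by positivity
  ext x
  have hfloor : x ∈ Ico 0 1 ↔ 0 ≤ ⌊x * b⌋ ∧ ⌊x * b⌋ < b := by
    rw [Int.floor_nonneg, Int.floor_lt, Int.cast_natCast, mul_nonneg_iff_of_pos_right hpos,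
      mul_lt_iff_lt_one_left hpos, mem_Ico]
  simp only [mem_iUnion, mem_digitInterval, hfloor]
  constructor
  · rintro ⟨ξ, hξ⟩
    omega
  · rintro ⟨h0, h1⟩
    exact ⟨⟨⌊x * b⌋.toNat, by omega⟩, by simp [h0]⟩

lemma map_prependDigit_unitVolume (ξ : Fin b) :
    unitVolume.map (prependDigit ξ) = (b : ENNReal) • volume.restrict (digitInterval ξ) := by
  have hb : (b : ℝ) ≠ 0 := Nat.cast_ne_zero.2 ξ.pos.ne'
  have hpre : prependDigit ξ ⁻¹' digitInterval ξ = Ico 0 1 := by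
    ext x
    simp only [mem_preimage, mem_digitInterval, prependDigit, div_mul_cancel₀ _ hb,
      Int.floor_natCast_add, add_eq_left, Int.floor_eq_zero_iff]
  rw [unitVolume, ← hpre,
    ← Measure.restrict_map (measurable_prependDigit ξ) (measurableSet_digitInterval ξ),
    map_prependDigit_volume, Measure.restrict_smul]

lemma sum_map_prependDigit_unitVolume (hb : b ≠ 0) :
    Measure.sum (fun ξ : Fin b => unitVolume.map (prependDigit ξ))
      = (b : ENNReal) • unitVolume := by
  simp_rw [map_prependDigit_unitVolume]
  rw [Measure.sum_fintype, ← Finset.smul_sum, ← Measure.sum_fintype,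
    ← Measure.restrict_iUnion pairwise_disjoint_digitInterval measurableSet_digitInterval,
    iUnion_digitInterval hb]

lemma sum_map_prependDigits_unitSquareVolume (hb : b ≠ 0) :
    Measure.sum (fun i : Fin b × Fin b => unitSquareVolume.map (prependDigits i))
      = (b * b : ENNReal) • unitSquareVolume := by
  simp_rw [prependDigits, ← Measure.map_prod_map _ _ (measurable_prependDigit _)
    (measurable_prependDigit _)]
  rw [← Measure.prod_sum (fun ξ => unitVolume.map (prependDigit ξ))
    (fun η => unitVolume.map (prependDigit η)), sum_map_prependDigit_unitVolume hb,
    Measure.prod_smul_left, Measure.prod_smul_right, smul_smul]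

lemma sum_integral_prependDigits {E : Type*} [NormedAddCommGroup E] [NormedSpace ℝ E]
    (hb : b ≠ 0) {F : ℝ × ℝ → E} (hF : Integrable F unitSquareVolume) :
    ∑ i : Fin b × Fin b, ∫ p, F (prependDigits i p) ∂unitSquareVolume
      = (b : ℝ) ^ 2 • ∫ p, F p ∂unitSquareVolume := by
  have hμ := sum_map_prependDigits_unitSquareVolume hb
  have hsum : Integrable F
      (Measure.sum fun i : Fin b × Fin b => unitSquareVolume.map (prependDigits i)) :=
    hμ ▸ hF.smul_measure (by finiteness)
  have hmap (i : Fin b × Fin b) : ∫ p, F (prependDigits i p) ∂unitSquareVolume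
      = ∫ p, F p ∂unitSquareVolume.map (prependDigits i) :=
    (integral_map (measurable_prependDigits i).aemeasurable
      (hsum.mono_measure (Measure.le_sum _ i)).aestronglyMeasurable).symm
  simp_rw [hmap]
  rw [← tsum_fintype (L := .unconditional _), ← integral_sum_measure hsum, hμ,
    integral_smul_measure]
  simp [sq]

end SelfSimilarity

/-! ### Walsh coefficients -/

/-- The Walsh coefficient of index `(k, l)` of a kernel `F` on the unit square. -/
noncomputable def walshCoeff (b : ℕ) (F : ℝ × ℝ → ℂ) (k l : ℕ) : ℂ :=
  ∫ p, F p * starRingEnd ℂ (walsh b k p.1) * walsh b l p.2 ∂unitSquareVolume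

/-- The factor by which `conj (walsh b k x) * walsh b l y` changes when the digits `i.1` and `i.2`
are prepended to `x` and `y`. -/
noncomputable def digitWeight {b : ℕ} (k l : ℕ) (i : Fin b × Fin b) : ℂ :=
  walshRoot b ^ (l * i.2 - k * i.1 : ℤ)

section WalshCoeff

variable {b : ℕ}

lemma ae_mem_unitSquare : ∀ᵐ p ∂unitSquareVolume, p ∈ Ico (0 : ℝ) 1 ×ˢ Ico (0 : ℝ) 1 := by
  rw [unitSquareVolume, Measure.prod_restrict]
  exact ae_restrict_mem (measurableSet_Ico.prod measurableSet_Ico)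

lemma walshCoeff_congr {F G : ℝ × ℝ → ℂ} (h : EqOn F G (Ico 0 1 ×ˢ Ico 0 1)) (k l : ℕ) :
    walshCoeff b F k l = walshCoeff b G k l :=
  integral_congr_ae <| ae_mem_unitSquare.mono fun p hp => by simp only [h hp]

lemma integrable_mul_walsh {F : ℝ × ℝ → ℂ} (hF : Integrable F unitSquareVolume) (k l : ℕ) :
    Integrable (fun p => F p * starRingEnd ℂ (walsh b k p.1) * walsh b l p.2)
      unitSquareVolume := by
  have hconj : Measurable fun p : ℝ × ℝ => starRingEnd ℂ (walsh b k p.1) :=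
    Complex.continuous_conj.measurable.comp ((measurable_walsh b k).comp measurable_fst)
  have hwalsh : Measurable fun p : ℝ × ℝ => walsh b l p.2 :=
    (measurable_walsh b l).comp measurable_snd
  exact (hF.mul_bdd (c := 1) hconj.aestronglyMeasurable
    (.of_forall fun p => by rw [RCLike.norm_conj, norm_walsh])).mul_bdd (c := 1)
      hwalsh.aestronglyMeasurable (.of_forall fun p => by rw [norm_walsh])

lemma walshCoeff_eq_integral_integral {F : ℝ × ℝ → ℂ} (hF : Integrable F unitSquareVolume)
    (k l : ℕ) :
    walshCoeff b F k l = ∫ x in Ico (0 : ℝ) 1, ∫ y in Ico (0 : ℝ) 1,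
      F (x, y) * starRingEnd ℂ (walsh b k x) * walsh b l y :=
  integral_prod _ (integrable_mul_walsh hF k l)

lemma walshCoeff_sum_mul {ι : Type*} (s : Finset ι) (w : ι → ℂ) {F : ι → ℝ × ℝ → ℂ}
    (hF : ∀ i ∈ s, Integrable (F i) unitSquareVolume) (k l : ℕ) :
    walshCoeff b (fun p => ∑ i ∈ s, w i * F i p) k l = ∑ i ∈ s, w i * walshCoeff b (F i) k l := by
  simp_rw [walshCoeff, Finset.sum_mul, mul_assoc (w _)]
  rw [integral_finsetSum _ fun i hi => (integrable_mul_walsh (hF i hi) k l).const_mul (w i)]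
  simp_rw [integral_const_mul]

lemma conj_walsh_mul_walsh_prependDigits (hb : 1 < b) (k l : ℕ) (i : Fin b × Fin b) {p : ℝ × ℝ}
    (hp : p ∈ Ico (0 : ℝ) 1 ×ˢ Ico (0 : ℝ) 1) :
    starRingEnd ℂ (walsh b k (prependDigits i p).1) * walsh b l (prependDigits i p).2
      = digitWeight k l i * (starRingEnd ℂ (walsh b (k / b) p.1) * walsh b (l / b) p.2) := by
  have hconj : starRingEnd ℂ (walshRoot b) = (walshRoot b)⁻¹ :=
    (Complex.inv_eq_conj (norm_walshRoot b)).symm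
  simp only [prependDigits, Prod.map_fst, Prod.map_snd, walsh_prependDigit hb _ _ hp.1,
    walsh_prependDigit hb _ _ hp.2, map_mul, map_zpow₀, hconj, digitWeight,
    zpow_sub₀ (walshRoot_ne_zero b), inv_zpow]
  ring

lemma sq_mul_walshCoeff (hb : 1 < b) {F : ℝ × ℝ → ℂ}
    (hF : Integrable F unitSquareVolume) (k l : ℕ) :
    (b : ℂ) ^ 2 * walshCoeff b F k l
      = ∑ i : Fin b × Fin b,
          digitWeight k l i * walshCoeff b (F ∘ prependDigits i) (k / b) (l / b) := by
  have hsum := sum_integral_prependDigits (Nat.zero_lt_of_lt hb).ne'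
    (integrable_mul_walsh (b := b) hF k l)
  rw [Complex.real_smul, Complex.ofReal_pow, Complex.ofReal_natCast] at hsum
  rw [walshCoeff, ← hsum]
  refine Finset.sum_congr rfl fun i _ => ?_
  rw [walshCoeff, ← integral_const_mul]
  refine integral_congr_ae <| ae_mem_unitSquare.mono fun p hp => ?_
  simp only [mul_assoc, conj_walsh_mul_walsh_prependDigits hb k l i hp, Function.comp_apply]
  ring

lemma sum_digitWeight_diag {k l : ℕ} (h : k % b ≠ l % b) :
    ∑ ξ : Fin b, digitWeight k l (ξ, ξ) = 0 := by
  simp_rw [digitWeight, ← sub_mul]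
  exact sum_walshRoot_zpow_mul_eq_zero fun hdvd => h (Nat.modEq_iff_dvd.2 hdvd)

lemma sum_digitWeight {k l : ℕ} (h : k % b ≠ l % b) :
    ∑ i : Fin b × Fin b, digitWeight k l i = 0 := by
  have hfactor (i : Fin b × Fin b) :
      digitWeight k l i = walshRoot b ^ (-k * i.1 : ℤ) * walshRoot b ^ (l * i.2 : ℤ) := by
    rw [digitWeight, ← zpow_add₀ (walshRoot_ne_zero b), neg_mul, neg_add_eq_sub]
  simp_rw [hfactor, Fintype.sum_prod_type, ← Finset.mul_sum, ← Finset.sum_mul]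
  by_cases hk : (b : ℤ) ∣ -k
  · have hl : ¬ (b : ℤ) ∣ l := fun hl =>
      h (Nat.modEq_iff_dvd.2 (dvd_sub hl (by simpa using hk)))
    rw [sum_walshRoot_zpow_mul_eq_zero hl, mul_zero]
  · rw [sum_walshRoot_zpow_mul_eq_zero hk, zero_mul]

end WalshCoeff

/-! ### Polynomial kernels with a jump across the diagonal -/

section Degree

variable {R : Type*} [CommRing R] {n : ℕ} {P : R[X]}

lemma taylor_sub_self_mem_degreeLT (hP : P ∈ degreeLT R (n + 1)) (c : R) :
    taylor c P - P ∈ degreeLT R n := by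
  rcases eq_or_ne P 0 with rfl | h0
  · simp
  have hdeg : P.degree ≤ n := by rwa [degreeLT_succ_eq_degreeLE, mem_degreeLE] at hP
  rw [mem_degreeLT]
  have := degree_sub_lt_left (degree_taylor P c) ((taylor_eq_zero c P).not.2 h0)
    (leadingCoeff_taylor c P)
  exact this.trans_le ((degree_taylor P c).trans_le hdeg)

lemma sum_smul_taylor_mem_degreeLT {ι : Type*} {s : Finset ι} {w : ι → R}
    (hw : ∑ i ∈ s, w i = 0) (hP : P ∈ degreeLT R (n + 1)) (c : ι → R) :
    ∑ i ∈ s, w i • taylor (c i) P ∈ degreeLT R n := by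
  have hsum : ∑ i ∈ s, w i • taylor (c i) P = ∑ i ∈ s, w i • (taylor (c i) P - P) := by
    simp_rw [smul_sub, Finset.sum_sub_distrib, ← Finset.sum_smul, hw, zero_smul, sub_zero]
  rw [hsum]
  exact Submodule.sum_mem _ fun i _ =>
    Submodule.smul_mem _ _ (taylor_sub_self_mem_degreeLT hP (c i))

lemma comp_C_mul_X_mem_degreeLT (hP : P ∈ degreeLT R n) (a : R) :
    P.comp (C a * X) ∈ degreeLT R n := by
  rw [mem_degreeLT, degree_lt_iff_coeff_zero] at hP ⊢
  intro m hm
  rw [comp_C_mul_X_coeff, hP m hm, zero_mul]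

end Degree

/-- The kernel `P (x - y) + 1_{x < y} Q (x - y)`. -/
noncomputable def jumpKernel (P Q : ℂ[X]) (p : ℝ × ℝ) : ℂ :=
  P.eval ((p.1 - p.2 : ℝ) : ℂ) + if p.1 < p.2 then Q.eval ((p.1 - p.2 : ℝ) : ℂ) else 0

section JumpKernel

variable {b : ℕ}

lemma integrable_jumpKernel (P Q : ℂ[X]) : Integrable (jumpKernel P Q) unitSquareVolume := by
  have hpoly (R : ℂ[X]) :
      Integrable (fun p : ℝ × ℝ => R.eval ((p.1 - p.2 : ℝ) : ℂ)) unitSquareVolume := by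
    rw [unitSquareVolume, Measure.prod_restrict]
    have hcont : Continuous fun p : ℝ × ℝ => R.eval ((p.1 - p.2 : ℝ) : ℂ) := by fun_prop
    exact (hcont.continuousOn.integrableOn_compact (isCompact_Icc.prod isCompact_Icc)).mono_set
      (prod_mono Ico_subset_Icc_self Ico_subset_Icc_self)
  exact (hpoly P).add
    ((hpoly Q).indicator (measurableSet_lt measurable_fst measurable_snd))

lemma jumpKernel_sum_smul {ι : Type*} (s : Finset ι) (w : ι → ℂ) (P Q : ι → ℂ[X]) (p : ℝ × ℝ) :
    jumpKernel (∑ i ∈ s, w i • P i) (∑ i ∈ s, w i • Q i) p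
      = ∑ i ∈ s, w i * jumpKernel (P i) (Q i) p := by
  simp only [jumpKernel, eval_finsetSum, eval_smul, smul_eq_mul, mul_add, Finset.sum_add_distrib]
  split_ifs <;> simp

/-- The restriction of `P (x - y)` to the cell `i`, as a polynomial in the difference of the
rescaled coordinates. -/
noncomputable def cellPoly (i : Fin b × Fin b) (P : ℂ[X]) : ℂ[X] :=
  taylor (i.1 - i.2 : ℂ) (P.comp (C (b : ℂ)⁻¹ * X))

lemma eval_cellPoly (i : Fin b × Fin b) (P : ℂ[X]) (p : ℝ × ℝ) :
    (cellPoly i P).eval ((p.1 - p.2 : ℝ) : ℂ)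
      = P.eval (((prependDigits i p).1 - (prependDigits i p).2 : ℝ) : ℂ) := by
  rw [cellPoly, taylor_eval, eval_comp, eval_C_mul, eval_X]
  congr 1
  simp only [prependDigits, Prod.map_fst, Prod.map_snd, prependDigit]
  push_cast
  ring

lemma cellPoly_mem_degreeLT {n : ℕ} {P : ℂ[X]} (hP : P ∈ degreeLT ℂ n) (i : Fin b × Fin b) :
    cellPoly i P ∈ degreeLT ℂ n :=
  taylor_mem_degreeLT.2 (comp_C_mul_X_mem_degreeLT hP _)

lemma cellPoly_diag (ξ : Fin b) (P : ℂ[X]) : cellPoly (ξ, ξ) P = P.comp (C (b : ℂ)⁻¹ * X) := by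
  rw [cellPoly, sub_self, taylor_zero]

lemma jumpKernel_prependDigits (P Q : ℂ[X]) (i : Fin b × Fin b) {p : ℝ × ℝ}
    (hp : p ∈ Ico (0 : ℝ) 1 ×ˢ Ico (0 : ℝ) 1) :
    jumpKernel P Q (prependDigits i p)
      = jumpKernel (cellPoly i P + if i.1 < i.2 then cellPoly i Q else 0)
          (if i.1 = i.2 then cellPoly i Q else 0) p := by
  have hlt : (prependDigits i p).1 < (prependDigits i p).2 ↔ i.1 < i.2 ∨ i.1 = i.2 ∧ p.1 < p.2 :=
    prependDigit_lt_prependDigit_iff hp.1 hp.2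
  simp only [jumpKernel, hlt, eval_add, ← eval_cellPoly]
  rcases lt_trichotomy i.1 i.2 with h | h | h
  · simp [h, h.ne]
  · simp [h]
  · simp [h.not_gt, h.ne']

/-- The polynomial part of the sum, weighted by `digitWeight`, of the restrictions of
`jumpKernel P Q` to the cells, each rescaled to the unit square. -/
noncomputable def cellPolySum (b : ℕ) (k l : ℕ) (P Q : ℂ[X]) : ℂ[X] :=
  ∑ i : Fin b × Fin b, digitWeight k l i • (cellPoly i P + if i.1 < i.2 then cellPoly i Q else 0)

/-- The jump part of the sum whose polynomial part is `cellPolySum`; only diagonal cells contribute,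
so it does not involve `P`. -/
noncomputable def cellJumpSum (b : ℕ) (k l : ℕ) (Q : ℂ[X]) : ℂ[X] :=
  ∑ i : Fin b × Fin b, digitWeight k l i • if i.1 = i.2 then cellPoly i Q else 0

lemma sq_mul_walshCoeff_jumpKernel (hb : 1 < b) (P Q : ℂ[X]) (k l : ℕ) :
    (b : ℂ) ^ 2 * walshCoeff b (jumpKernel P Q) k l
      = walshCoeff b (jumpKernel (cellPolySum b k l P Q) (cellJumpSum b k l Q))
          (k / b) (l / b) := by
  have hcell (i : Fin b × Fin b) :
      walshCoeff b (jumpKernel P Q ∘ prependDigits i) (k / b) (l / b) = _ :=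
    walshCoeff_congr (fun p hp => jumpKernel_prependDigits P Q i hp) _ _
  rw [sq_mul_walshCoeff hb (integrable_jumpKernel P Q)]
  simp_rw [hcell]
  rw [← walshCoeff_sum_mul _ _ fun i _ => integrable_jumpKernel _ _]
  simp_rw [← jumpKernel_sum_smul]
  rfl

lemma cellPolySum_mem_degreeLT {n : ℕ} {P Q : ℂ[X]} (k l : ℕ) (hP : P ∈ degreeLT ℂ n)
    (hQ : Q ∈ degreeLT ℂ n) : cellPolySum b k l P Q ∈ degreeLT ℂ n := by
  refine Submodule.sum_mem _ fun i _ => Submodule.smul_mem _ _ <|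
    Submodule.add_mem _ (cellPoly_mem_degreeLT hP i) ?_
  split_ifs
  exacts [cellPoly_mem_degreeLT hQ i, Submodule.zero_mem _]

lemma cellPolySum_mem_degreeLT_of_ne {n k l : ℕ} (h : k % b ≠ l % b) {P Q : ℂ[X]}
    (hP : P ∈ degreeLT ℂ (n + 1)) (hQ : Q ∈ degreeLT ℂ n) :
    cellPolySum b k l P Q ∈ degreeLT ℂ n := by
  simp_rw [cellPolySum, smul_add, Finset.sum_add_distrib]
  refine Submodule.add_mem _ (sum_smul_taylor_mem_degreeLT (sum_digitWeight h)
    (comp_C_mul_X_mem_degreeLT hP _) _) ?_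
  refine Submodule.sum_mem _ fun i _ => Submodule.smul_mem _ _ ?_
  split_ifs
  exacts [cellPoly_mem_degreeLT hQ i, Submodule.zero_mem _]

lemma cellJumpSum_mem_degreeLT {n : ℕ} {Q : ℂ[X]} (k l : ℕ) (hQ : Q ∈ degreeLT ℂ n) :
    cellJumpSum b k l Q ∈ degreeLT ℂ n := by
  refine Submodule.sum_mem _ fun i _ => Submodule.smul_mem _ _ ?_
  split_ifs
  exacts [cellPoly_mem_degreeLT hQ i, Submodule.zero_mem _]

lemma cellJumpSum_eq_zero {k l : ℕ} (h : k % b ≠ l % b) (Q : ℂ[X]) :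
    cellJumpSum b k l Q = 0 := by
  simp_rw [cellJumpSum, Fintype.sum_prod_type, smul_ite, smul_zero, Finset.sum_ite_eq,
    Finset.mem_univ, if_true, cellPoly_diag, ← Finset.sum_smul, sum_digitWeight_diag h, zero_smul]

lemma walshCoeff_jumpKernel_eq_zero (hb : 1 < b) {n k l : ℕ} {P Q : ℂ[X]}
    (hP : P ∈ degreeLT ℂ (hammingDist (digitVec b n k) (digitVec b n l)))
    (hQ : Q ∈ degreeLT ℂ (hammingDist (digitVec b n k) (digitVec b n l) - 1)) :
    walshCoeff b (jumpKernel P Q) k l = 0 := by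
  induction n generalizing k l P Q with
  | zero =>
    simp only [hammingDist, Finset.univ_eq_empty, Finset.filter_empty, Finset.card_empty,
      mem_degreeLT] at hP hQ
    obtain rfl : P = 0 := by simpa using hP
    obtain rfl : Q = 0 := by simpa using hQ
    simp [walshCoeff, jumpKernel]
  | succ n ih =>
    have hb2 : (b : ℂ) ^ 2 ≠ 0 := pow_ne_zero 2 (Nat.cast_ne_zero.2 (Nat.zero_lt_of_lt hb).ne')
    refine (mul_eq_zero.1 ?_).resolve_left hb2
    rw [sq_mul_walshCoeff_jumpKernel hb]
    rw [hammingDist_digitVec_succ] at hP hQ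
    by_cases h : k % b = l % b
    · rw [if_pos h, add_zero] at hP hQ
      exact ih (cellPolySum_mem_degreeLT k l hP (degreeLT_mono (Nat.sub_le _ _) hQ))
        (cellJumpSum_mem_degreeLT k l hQ)
    · rw [if_neg h] at hP hQ
      rw [cellJumpSum_eq_zero h]
      exact ih (cellPolySum_mem_degreeLT_of_ne h hP hQ) (Submodule.zero_mem _)

end JumpKernel

/-! ### Periodic kernels -/

lemma eval_fract_sub_eq_jumpKernel (P : ℂ[X]) {p : ℝ × ℝ}
    (hp : p ∈ Ico (0 : ℝ) 1 ×ˢ Ico (0 : ℝ) 1) :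
    P.eval ((Int.fract (p.1 - p.2) : ℝ) : ℂ) = jumpKernel P (taylor 1 P - P) p := by
  obtain ⟨⟨hx0, hx1⟩, hy0, hy1⟩ := hp
  rw [jumpKernel, eval_sub, taylor_eval]
  split_ifs with hlt
  · have hfract : Int.fract (p.1 - p.2) = p.1 - p.2 + 1 :=
      Int.fract_eq_iff.2 ⟨by linarith, by linarith, -1, by push_cast; ring⟩
    rw [hfract]
    push_cast
    ring
  · rw [Int.fract_eq_self.2 ⟨by linarith, by linarith⟩, add_zero]

theorem bhatPer_sparse_general {b : ℕ} (hb : 1 < b) {P : ℂ[X]} {k l : ℕ}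
    (h : P.degree < hamming b (dsub b k l)) :
    ∫ x in Ico (0 : ℝ) 1, ∫ y in Ico (0 : ℝ) 1,
      P.eval ((Int.fract (x - y) : ℝ) : ℂ) * starRingEnd ℂ (walsh b k x) * walsh b l y = 0 := by
  rw [hamming_dsub hb, ← mem_degreeLT] at h
  have hjump : taylor 1 P - P ∈
      degreeLT ℂ (hammingDist (digitVec b (k + l) k) (digitVec b (k + l) l) - 1) :=
    taylor_sub_self_mem_degreeLT (degreeLT_mono (by omega) h) 1
  have heq : EqOn (fun p : ℝ × ℝ => P.eval ((Int.fract (p.1 - p.2) : ℝ) : ℂ))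
      (jumpKernel P (taylor 1 P - P)) (Ico 0 1 ×ˢ Ico 0 1) :=
    fun _ hp => eval_fract_sub_eq_jumpKernel P hp
  have hint := (integrable_jumpKernel P (taylor 1 P - P)).congr
    (ae_mem_unitSquare.mono fun _ hp => (heq hp).symm)
  rw [← walshCoeff_eq_integral_integral hint, walshCoeff_congr heq]
  exact walshCoeff_jumpKernel_eq_zero hb h hjump

/-- The polynomial `B_r / r!` with complex coefficients. -/
noncomputable def normalizedBernoulli (r : ℕ) : ℂ[X] :=
  (r.factorial : ℂ)⁻¹ • (Polynomial.bernoulli r).map (algebraMap ℚ ℂ)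

lemma eval_normalizedBernoulli (r : ℕ) (t : ℝ) :
    (normalizedBernoulli r).eval (t : ℂ) = ((bernoulliPoly r t / r.factorial : ℝ) : ℂ) := by
  rw [normalizedBernoulli, eval_smul, smul_eq_mul, eval_map_algebraMap, bernoulliPoly,
    Complex.ofReal_div, div_eq_inv_mul, Complex.ofReal_natCast, ← Complex.coe_algebraMap,
    aeval_algebraMap_apply]

lemma degree_normalizedBernoulli_le (r : ℕ) : (normalizedBernoulli r).degree ≤ r := by
  refine (degree_smul_le _ _).trans (degree_map_le.trans (degree_le_iff_coeff_zero _ _ |>.2 ?_))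
  intro m hm
  rw [Polynomial.coeff_bernoulli, if_neg (by exact_mod_cast hm.not_ge)]

/-- Lemma 6. For a prime `b` and `r ≥ 2`, if `k, l ∈ ℕ₀` satisfy
`κ(k ⊖ l) > r`, then `b̂_{r,per}(k,l) = 0`. -/
theorem bhatPer_sparse (b r : ℕ) (hb : b.Prime) (hr : 2 ≤ r) (k l : ℕ)
    (h : r < hamming b (dsub b k l)) : bhatPer b r k l = 0 := by
  simpa only [bhatPer, eval_normalizedBernoulli] using bhatPer_sparse_general hb.one_lt
    ((degree_normalizedBernoulli_le r).trans_lt (by exact_mod_cast h))
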